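/- arXiv:2511.08543 — 2 statements merged into one kernel-verified Lean document; each statement's English description precedes it below -/
import Mathlib

section
/- Let N_A, N_B ≥ 1 and m ≥ 1 be integers, and set μ_m := ∏_{i=0}^{m−1} (N_A+i)/(N_A·N_B+i). Then N_B^{−m} ≤ μ_m ≤ N_B^{−m}·e^{m²/N_A}; in particular the Jensen gap satisfies 0 ≤ μ_m − N_B^{−m} ≤ N_B^{−m}·(e^{m²/N_A} − 1). -/
/-! Each factor satisfies `1/N_B ≤ (N_A+i)/(N_A N_B+i) ≤ (1/N_B)(1 + i/N_A) ≤ (1/N_B) e^{m/N_A}`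
for `i < m`, using `N_B ≥ 1` on the left and `1 + x ≤ e^x` on the right. Multiplying the `m` factors
gives both bounds on `μ_m`, and the bounds on the Jensen gap are rearrangements of these. -/

open MeasureTheory Matrix
open scoped ComplexOrder

noncomputable section

/-- The Haar moment `μ_m = E_{Φ∼Haar}[q_z^m] = ∏_{i=0}^{m−1}(N_A+i)/(N_A·N_B+i)`. -/
def haarQMoment (NA NB m : ℕ) : ℝ :=
  ∏ i ∈ Finset.range m, ((NA : ℝ) + i) / ((NA : ℝ) * NB + i)

/-- `N_B^{−m} ≤ μ_m ≤ N_B^{−m} e^{m²/N_A}`; in particular the Jensen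
gap satisfies `0 ≤ μ_m − N_B^{−m} ≤ N_B^{−m}(e^{m²/N_A} − 1)`. -/
theorem haarQMoment_bounds (NA NB m : ℕ) (hNA : 1 ≤ NA) (hNB : 1 ≤ NB) (hm : 1 ≤ m) :
    (((NB : ℝ)) ^ m)⁻¹ ≤ haarQMoment NA NB m ∧
      haarQMoment NA NB m ≤ (((NB : ℝ)) ^ m)⁻¹ * Real.exp ((m : ℝ) ^ 2 / NA) ∧
      0 ≤ haarQMoment NA NB m - (((NB : ℝ)) ^ m)⁻¹ ∧
      haarQMoment NA NB m - (((NB : ℝ)) ^ m)⁻¹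
        ≤ (((NB : ℝ)) ^ m)⁻¹ * (Real.exp ((m : ℝ) ^ 2 / NA) - 1) := by
  have hA : (1 : ℝ) ≤ NA := by exact_mod_cast hNA
  have hB : (1 : ℝ) ≤ NB := by exact_mod_cast hNB
  have hA0 : (0 : ℝ) < NA := by linarith
  have hB0 : (0 : ℝ) < NB := by linarith
  have lower : ((NB : ℝ) ^ m)⁻¹ ≤ haarQMoment NA NB m := by
    have hconst : ((NB : ℝ) ^ m)⁻¹ = ∏ _i ∈ Finset.range m, (NB : ℝ)⁻¹ := by
      rw [Finset.prod_const, Finset.card_range, inv_pow]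
    rw [hconst, haarQMoment]
    refine Finset.prod_le_prod (fun i _ => by positivity) fun i _ => ?_
    have hi : (0 : ℝ) ≤ i := Nat.cast_nonneg i
    rw [inv_eq_one_div, div_le_div_iff₀ hB0 (by positivity)]
    nlinarith
  have upper : haarQMoment NA NB m ≤ ((NB : ℝ) ^ m)⁻¹ * Real.exp ((m : ℝ) ^ 2 / NA) := by
    have hconst : ((NB : ℝ) ^ m)⁻¹ * Real.exp ((m : ℝ) ^ 2 / NA)
        = ∏ _i ∈ Finset.range m, ((NB : ℝ)⁻¹ * Real.exp ((m : ℝ) / NA)) := by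
      rw [Finset.prod_const, Finset.card_range, mul_pow, inv_pow, ← Real.exp_nat_mul]
      congr 2
      ring
    rw [hconst, haarQMoment]
    refine Finset.prod_le_prod (fun i _ => by positivity) fun i hi => ?_
    have him : (i : ℝ) ≤ m := by exact_mod_cast (Finset.mem_range.mp hi).le
    have hi0 : (0 : ℝ) ≤ i := Nat.cast_nonneg i
    calc ((NA : ℝ) + i) / ((NA : ℝ) * NB + i) ≤ ((NA : ℝ) + i) / ((NA : ℝ) * NB) := by
          gcongr
          linarith
      _ = (NB : ℝ)⁻¹ * ((i : ℝ) / NA + 1) := by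
          field_simp
          ring
      _ ≤ (NB : ℝ)⁻¹ * Real.exp ((i : ℝ) / NA) := by
          gcongr
          exact Real.add_one_le_exp _
      _ ≤ (NB : ℝ)⁻¹ * Real.exp ((m : ℝ) / NA) := by gcongr
  exact ⟨lower, upper, by linarith, by linarith⟩

end
end

section
/- For every real x ≥ 1, |J_1(x)| < 1/√x, where J_1 is the Bessel function of the first kind of order 1, given by the integral representation J_1(x) = (1/π) ∫_0^π cos(τ − x·sin τ) dτ. -/
/-!
The function `u(x) = √x J₁(x)` satisfies `u'' + (1 - 3/(4x²)) u = 0`, and the potential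
`q(x) = 1 - 3/(4x²)` increases. Hence the Sonine-type energy `u² + u'²/q` decreases where `q > 0`.
Written without square roots it is

  `F(x) = x J₁² + x (J₁ + 2 x J₁')² / (4x² - 3)`,  `F' = -6 (J₁ + 2 x J₁')² / (4x² - 3)²`,

so `x J₁(x)² ≤ F(x) ≤ F(3/2)` for `x ≥ 3/2` (`besselEnergy_antitone`), and crude Taylor bounds for
`J₁(3/2)` and `J₁'(3/2)` give `F(3/2) < 1`. For `1 ≤ x < 3/2` the bound `|J₁(x)| ≤ x/2` suffices.

Bessel's equation comes from differentiating twice under the integral sign and recognising the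
resulting integrand as an exact derivative in `τ` (`bessel_equation`). The numerical bounds use
`π J₁ = ∫ sin τ sin(x sin τ)` and `π J₁' = ∫ sin² τ cos(x sin τ)`.
-/

noncomputable section

/-- The Bessel function of the first kind of order 1, via Bessel's integral
representation `J₁(x) = (1/π) ∫₀^π cos(τ − x sin τ) dτ`. -/
def besselJ1 (x : ℝ) : ℝ :=
  (1 / Real.pi) * ∫ τ in (0 : ℝ)..Real.pi, Real.cos (τ - x * Real.sin τ)

open Real intervalIntegral

/-- The derivative of `besselJ1`, see `hasDerivAt_besselJ1`. -/
def besselJ1' (x : ℝ) : ℝ :=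
  (1 / π) * ∫ τ in (0 : ℝ)..π, sin τ * sin (τ - x * sin τ)

/-- The second derivative of `besselJ1`, see `hasDerivAt_besselJ1'`. -/
def besselJ1'' (x : ℝ) : ℝ :=
  (1 / π) * ∫ τ in (0 : ℝ)..π, -(sin τ ^ 2 * cos (τ - x * sin τ))

lemma hasDerivAt_besselJ1 (x : ℝ) : HasDerivAt besselJ1 (besselJ1' x) x := by
  refine HasDerivAt.const_mul (1 / π) ?_
  refine (intervalIntegral.hasDerivAt_integral_of_dominated_loc_of_deriv_le
    (F := fun x τ => cos (τ - x * sin τ)) (F' := fun x τ => sin τ * sin (τ - x * sin τ))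
    (bound := fun _ => 1) (s := Set.univ) Filter.univ_mem ?_ ?_ ?_ ?_ ?_ ?_).2
  · exact Filter.Eventually.of_forall fun y =>
      (by fun_prop : Continuous fun τ => cos (τ - y * sin τ)).aestronglyMeasurable
  · exact (by fun_prop : Continuous fun τ => cos (τ - x * sin τ)).intervalIntegrable _ _
  · exact (by fun_prop : Continuous fun τ => sin τ * sin (τ - x * sin τ)).aestronglyMeasurable
  · refine Filter.Eventually.of_forall fun τ _ y _ => ?_
    rw [norm_mul]
    exact mul_le_one₀ (abs_sin_le_one _) (norm_nonneg _) (abs_sin_le_one _)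
  · exact intervalIntegrable_const
  · refine Filter.Eventually.of_forall fun τ _ y _ => ?_
    have h := (((hasDerivAt_id y).mul_const (sin τ)).const_sub τ).cos
    refine h.congr_deriv ?_
    simp
    ring

lemma hasDerivAt_besselJ1' (x : ℝ) : HasDerivAt besselJ1' (besselJ1'' x) x := by
  refine HasDerivAt.const_mul (1 / π) ?_
  refine (intervalIntegral.hasDerivAt_integral_of_dominated_loc_of_deriv_le
    (F := fun x τ => sin τ * sin (τ - x * sin τ))
    (F' := fun x τ => -(sin τ ^ 2 * cos (τ - x * sin τ)))
    (bound := fun _ => 1) (s := Set.univ) Filter.univ_mem ?_ ?_ ?_ ?_ ?_ ?_).2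
  · exact Filter.Eventually.of_forall fun y =>
      (by fun_prop : Continuous fun τ => sin τ * sin (τ - y * sin τ)).aestronglyMeasurable
  · exact (by fun_prop : Continuous fun τ => sin τ * sin (τ - x * sin τ)).intervalIntegrable _ _
  · exact (by fun_prop :
      Continuous fun τ => -(sin τ ^ 2 * cos (τ - x * sin τ))).aestronglyMeasurable
  · refine Filter.Eventually.of_forall fun τ _ y _ => ?_
    rw [norm_neg, norm_mul, norm_pow]
    exact mul_le_one₀ (pow_le_one₀ (norm_nonneg _) (abs_sin_le_one _)) (norm_nonneg _)
      (abs_cos_le_one _)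
  · exact intervalIntegrable_const
  · refine Filter.Eventually.of_forall fun τ _ y _ => ?_
    have h := ((((hasDerivAt_id y).mul_const (sin τ)).const_sub τ).sin).const_mul (sin τ)
    refine h.congr_deriv ?_
    simp
    ring

/-- The integrand of the left-hand side is the `τ`-derivative of
`-(1 + x cos τ) sin (τ - x sin τ)`, which vanishes at `0` and `π`. -/
lemma bessel_equation (x : ℝ) :
    x ^ 2 * besselJ1'' x + x * besselJ1' x + (x ^ 2 - 1) * besselJ1 x = 0 := by
  have key : ∫ τ in (0 : ℝ)..π, (x ^ 2 * -(sin τ ^ 2 * cos (τ - x * sin τ))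
      + x * (sin τ * sin (τ - x * sin τ)) + (x ^ 2 - 1) * cos (τ - x * sin τ)) = 0 := by
    rw [integral_eq_sub_of_hasDerivAt
      (f := fun τ => -((1 + x * cos τ) * sin (τ - x * sin τ)))]
    · simp
    · intro τ _
      have h := ((((hasDerivAt_cos τ).const_mul x).const_add 1).mul
        (((hasDerivAt_id τ).sub ((hasDerivAt_sin τ).const_mul x)).sin)).neg
      refine h.congr_deriv ?_
      simp only [id, Pi.sub_apply]
      have := sin_sq_add_cos_sq τ
      linear_combination (x ^ 2 * cos (τ - x * sin τ)) * this
    · exact (by fun_prop : Continuous _).intervalIntegrable _ _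
  rw [integral_add, integral_add, integral_const_mul, integral_const_mul, integral_const_mul]
    at key
  · unfold besselJ1 besselJ1' besselJ1''
    linear_combination (1 / π) * key
  all_goals exact (by fun_prop : Continuous _).intervalIntegrable _ _

/-- The energy `u² + u'² / q` for `u = √x J₁(x)` and `q = 1 - 3/(4x²)`. -/
def besselEnergy (x : ℝ) : ℝ :=
  x * besselJ1 x ^ 2 + x * (besselJ1 x + 2 * x * besselJ1' x) ^ 2 / (4 * x ^ 2 - 3)

lemma hasDerivAt_besselEnergy {x : ℝ} (hx : 3 / 2 ≤ x) : HasDerivAt besselEnergy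
    (-6 * (besselJ1 x + 2 * x * besselJ1' x) ^ 2 / (4 * x ^ 2 - 3) ^ 2) x := by
  have hQ : 4 * x ^ 2 - 3 ≠ 0 := by nlinarith
  have hJ := hasDerivAt_besselJ1 x
  have hD := hasDerivAt_besselJ1' x
  have hi := hasDerivAt_id x
  have h := (hi.mul (hJ.pow 2)).add (((hi.mul ((hJ.add ((hi.const_mul 2).mul hD)).pow 2))).div
    (((hi.pow 2).const_mul 4).sub_const 3) hQ)
  refine h.congr_deriv ?_
  simp only [id, Pi.mul_apply, Pi.add_apply, Pi.pow_apply]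
  have ode := bessel_equation x
  generalize besselJ1 x = J at *
  generalize besselJ1' x = D at *
  generalize besselJ1'' x = S at *
  have hQ' : x ^ 2 * 4 - 3 ≠ 0 := by rwa [mul_comm]
  norm_num
  field_simp
  linear_combination (4 * (J + 2 * x * D) * (4 * x ^ 2 - 3)) * ode

lemma besselEnergy_antitone : AntitoneOn besselEnergy (Set.Ici (3 / 2)) := by
  refine antitoneOn_of_hasDerivWithinAt_nonpos (convex_Ici _)
    (fun y hy => (hasDerivAt_besselEnergy hy).continuousAt.continuousWithinAt)
    (fun y hy => (hasDerivAt_besselEnergy (interior_subset hy)).hasDerivWithinAt) ?_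
  intro y _
  rw [neg_mul, neg_div]
  exact neg_nonpos.2 (by positivity)

lemma besselJ1_eq {x : ℝ} (hx : 0 < x) :
    besselJ1 x = (1 / π) * ∫ τ in (0 : ℝ)..π, sin τ * sin (x * sin τ) := by
  have h0 : ∫ τ in (0 : ℝ)..π, cos τ * cos (x * sin τ) = 0 := by
    rw [integral_eq_sub_of_hasDerivAt (f := fun τ => sin (x * sin τ) / x)]
    · simp
    · intro τ _
      have h := (((hasDerivAt_sin τ).const_mul x).sin).div_const x
      refine h.congr_deriv ?_
      field_simp
    · exact (by fun_prop : Continuous _).intervalIntegrable _ _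
  unfold besselJ1
  simp_rw [cos_sub]
  rw [integral_add, h0, zero_add]
  all_goals exact (by fun_prop : Continuous _).intervalIntegrable _ _

lemma besselJ1'_eq {x : ℝ} (hx : 0 < x) :
    besselJ1' x = (1 / π) * ∫ τ in (0 : ℝ)..π, sin τ ^ 2 * cos (x * sin τ) := by
  have h0 : ∫ τ in (0 : ℝ)..π, sin τ * cos τ * sin (x * sin τ) = 0 := by
    rw [integral_eq_sub_of_hasDerivAt
      (f := fun τ => sin (x * sin τ) / x ^ 2 - sin τ * cos (x * sin τ) / x)]
    · simp
    · intro τ _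
      have hs := (hasDerivAt_sin τ).const_mul x
      have h := (hs.sin.div_const (x ^ 2)).sub
        (((hasDerivAt_sin τ).mul hs.cos).div_const x)
      refine h.congr_deriv ?_
      field_simp
      ring
    · exact (by fun_prop : Continuous _).intervalIntegrable _ _
  unfold besselJ1'
  have e : ∀ τ, sin τ * sin (τ - x * sin τ)
      = sin τ ^ 2 * cos (x * sin τ) - sin τ * cos τ * sin (x * sin τ) := by
    intro τ
    rw [sin_sub]
    ring
  simp_rw [e]
  rw [integral_sub, h0, sub_zero]
  all_goals exact (by fun_prop : Continuous _).intervalIntegrable _ _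

lemma integral_sin_pow_two_pi : ∫ τ in (0 : ℝ)..π, sin τ ^ 2 = π / 2 := by
  simp [integral_sin_sq]

lemma integral_sin_pow_four_pi : ∫ τ in (0 : ℝ)..π, sin τ ^ 4 = 3 * π / 8 := by
  rw [integral_sin_pow 2, integral_sin_pow_two_pi]
  simp
  ring

lemma integral_sin_pow_six_pi : ∫ τ in (0 : ℝ)..π, sin τ ^ 6 = 5 * π / 16 := by
  rw [integral_sin_pow 4, integral_sin_pow_four_pi]
  simp
  ring

lemma integral_sin_even_poly (a b c : ℝ) :
    ∫ τ in (0 : ℝ)..π, (a * sin τ ^ 2 + b * sin τ ^ 4 + c * sin τ ^ 6)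
      = π * (a / 2 + 3 * b / 8 + 5 * c / 16) := by
  rw [integral_add, integral_add, integral_const_mul, integral_const_mul, integral_const_mul,
    integral_sin_pow_two_pi, integral_sin_pow_four_pi, integral_sin_pow_six_pi]
  · ring
  all_goals exact (by fun_prop : Continuous _).intervalIntegrable _ _

lemma besselJ1_abs_le {x : ℝ} (hx : 0 < x) : |besselJ1 x| ≤ x / 2 := by
  have h : ‖∫ τ in (0 : ℝ)..π, sin τ * sin (x * sin τ)‖
      ≤ ∫ τ in (0 : ℝ)..π, (x * sin τ ^ 2 + 0 * sin τ ^ 4 + 0 * sin τ ^ 6) := by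
    refine norm_integral_le_of_norm_le pi_pos.le ?_
      ((by fun_prop : Continuous _).intervalIntegrable _ _)
    refine Filter.Eventually.of_forall fun τ _ => ?_
    rw [norm_mul, norm_eq_abs, norm_eq_abs]
    calc |sin τ| * |sin (x * sin τ)| ≤ |sin τ| * |x * sin τ| := by
          exact mul_le_mul_of_nonneg_left abs_sin_le_abs (abs_nonneg _)
      _ = x * sin τ ^ 2 + 0 * sin τ ^ 4 + 0 * sin τ ^ 6 := by
          rw [abs_mul, abs_of_pos hx, ← sq_abs (sin τ)]
          ring
  rw [integral_sin_even_poly, norm_eq_abs] at h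
  rw [besselJ1_eq hx, abs_mul, abs_of_pos (by positivity), one_div, inv_mul_le_iff₀ pi_pos]
  linarith

lemma cos_le_quartic {y : ℝ} (h0 : 0 ≤ y) (h1 : y ≤ 3 / 2) :
    cos y ≤ 1 - y ^ 2 / 2 + y ^ 4 / 24 := by
  have h := sin_ge_sub_cube (x := y / 2) (by positivity)
  have hc : cos y = 1 - 2 * sin (y / 2) ^ 2 := by
    have := cos_two_mul (y / 2)
    have := sin_sq_add_cos_sq (y / 2)
    rw [show 2 * (y / 2) = y by ring] at *
    linarith
  have hp : 0 ≤ y / 2 - (y / 2) ^ 3 / 6 := by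
    have : 0 ≤ y * (24 - y ^ 2) := mul_nonneg h0 (by nlinarith)
    nlinarith
  have h2 := pow_le_pow_left₀ hp h 2
  have : 0 ≤ y ^ 6 := by positivity
  rw [hc]
  nlinarith

/-- A weakened Taylor bound, obtained from `sin y = 2 sin (y/2) cos (y/2)`. -/
lemma sin_le_quintic {y : ℝ} (h0 : 0 ≤ y) (h1 : y ≤ 3 / 2) :
    sin y ≤ y - y ^ 3 / 8 + y ^ 5 / 384 := by
  have hs : sin y = 2 * sin (y / 2) * cos (y / 2) := by
    rw [← sin_two_mul]
    ring_nf
  have hc := cos_le_quartic (y := y / 2) (by positivity) (by linarith)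
  have hc0 : 0 ≤ cos (y / 2) :=
    cos_nonneg_of_mem_Icc ⟨by linarith [pi_pos], by linarith [pi_gt_three]⟩
  have hs1 := sin_le (x := y / 2) (by positivity)
  calc sin y = 2 * sin (y / 2) * cos (y / 2) := hs
    _ ≤ y * cos (y / 2) := by nlinarith
    _ ≤ y * (1 - (y / 2) ^ 2 / 2 + (y / 2) ^ 4 / 24) := by gcongr
    _ = y - y ^ 3 / 8 + y ^ 5 / 384 := by ring

lemma mul_sin_mem {τ : ℝ} (hτ : τ ∈ Set.Icc 0 π) :
    0 ≤ sin τ ∧ 0 ≤ 3 / 2 * sin τ ∧ 3 / 2 * sin τ ≤ 3 / 2 := by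
  have := sin_nonneg_of_mem_Icc hτ
  have := sin_le_one τ
  exact ⟨by assumption, by linarith, by linarith⟩

lemma besselJ1_bounds : 0 ≤ besselJ1 (3 / 2) ∧ besselJ1 (3 / 2) ≤ 3 / 5 := by
  rw [besselJ1_eq (by norm_num)]
  constructor
  · refine mul_nonneg (by positivity) (integral_nonneg pi_pos.le fun τ hτ => ?_)
    obtain ⟨hs, h0, h1⟩ := mul_sin_mem hτ
    exact mul_nonneg hs (sin_nonneg_of_mem_Icc ⟨h0, by linarith [pi_gt_three]⟩)
  · have h : ∫ τ in (0 : ℝ)..π, sin τ * sin (3 / 2 * sin τ) ≤ ∫ τ in (0 : ℝ)..π,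
        (3 / 2 * sin τ ^ 2 + (-27 / 64) * sin τ ^ 4 + 81 / 4096 * sin τ ^ 6) := by
      refine integral_mono_on pi_pos.le ((by fun_prop : Continuous _).intervalIntegrable _ _)
        ((by fun_prop : Continuous _).intervalIntegrable _ _) fun τ hτ => ?_
      obtain ⟨hs, h0, h1⟩ := mul_sin_mem hτ
      refine (mul_le_mul_of_nonneg_left (sin_le_quintic h0 h1) hs).trans_eq ?_
      ring
    rw [integral_sin_even_poly] at h
    rw [one_div, inv_mul_le_iff₀ pi_pos]
    refine h.trans ?_
    gcongr
    norm_num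

lemma besselJ1'_bounds : 0 ≤ besselJ1' (3 / 2) ∧ besselJ1' (3 / 2) ≤ 3 / 20 := by
  rw [besselJ1'_eq (by norm_num)]
  constructor
  · refine mul_nonneg (by positivity) (integral_nonneg pi_pos.le fun τ hτ => ?_)
    obtain ⟨hs, h0, h1⟩ := mul_sin_mem hτ
    exact mul_nonneg (sq_nonneg _)
      (cos_nonneg_of_mem_Icc ⟨by linarith [pi_pos], by linarith [pi_gt_three]⟩)
  · have h : ∫ τ in (0 : ℝ)..π, sin τ ^ 2 * cos (3 / 2 * sin τ) ≤ ∫ τ in (0 : ℝ)..π,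
        (1 * sin τ ^ 2 + (-9 / 8) * sin τ ^ 4 + 27 / 128 * sin τ ^ 6) := by
      refine integral_mono_on pi_pos.le ((by fun_prop : Continuous _).intervalIntegrable _ _)
        ((by fun_prop : Continuous _).intervalIntegrable _ _) fun τ hτ => ?_
      obtain ⟨hs, h0, h1⟩ := mul_sin_mem hτ
      refine (mul_le_mul_of_nonneg_left (cos_le_quartic h0 h1) (sq_nonneg _)).trans_eq ?_
      ring
    rw [integral_sin_even_poly] at h
    rw [one_div, inv_mul_le_iff₀ pi_pos]
    refine h.trans ?_
    gcongr
    norm_num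

lemma besselEnergy_lt_one : besselEnergy (3 / 2) < 1 := by
  obtain ⟨a0, a1⟩ := besselJ1_bounds
  obtain ⟨b0, b1⟩ := besselJ1'_bounds
  have h1 := pow_le_pow_left₀ a0 a1 2
  have h2 : (besselJ1 (3 / 2) + 2 * (3 / 2) * besselJ1' (3 / 2)) ^ 2 ≤ (21 / 20) ^ 2 :=
    pow_le_pow_left₀ (by positivity) (by linarith) 2
  unfold besselEnergy
  norm_num at h1 h2 ⊢
  linarith

lemma mul_besselJ1_sq_lt_one {x : ℝ} (hx : 1 ≤ x) : x * besselJ1 x ^ 2 < 1 := by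
  rcases le_total (3 / 2) x with h | h
  · have hF : besselEnergy x ≤ besselEnergy (3 / 2) :=
      besselEnergy_antitone Set.self_mem_Ici h h
    have hQ : 0 ≤ 4 * x ^ 2 - 3 := by nlinarith
    have hn : 0 ≤ x * (besselJ1 x + 2 * x * besselJ1' x) ^ 2 / (4 * x ^ 2 - 3) := by positivity
    have := besselEnergy_lt_one
    unfold besselEnergy at hF this
    linarith
  · have hJ := pow_le_pow_left₀ (abs_nonneg _) (besselJ1_abs_le (x := x) (by linarith)) 2
    rw [sq_abs] at hJ
    calc x * besselJ1 x ^ 2 ≤ x * (x / 2) ^ 2 := by gcongr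
      _ ≤ 3 / 2 * (3 / 2 / 2) ^ 2 := by gcongr
      _ < 1 := by norm_num

/-- For every real `x ≥ 1`, `|J₁(x)| < 1/√x`. -/
theorem abs_besselJ1_lt_inv_sqrt (x : ℝ) (hx : 1 ≤ x) :
    |besselJ1 x| < 1 / Real.sqrt x := by
  have hx0 : 0 < x := by linarith
  rw [lt_div_iff₀ (sqrt_pos.2 hx0)]
  refine lt_of_pow_lt_pow_left₀ 2 zero_le_one ?_
  rw [mul_pow, sq_abs, sq_sqrt hx0.le, one_pow, mul_comm]
  exact mul_besselJ1_sq_lt_one hx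

end
end
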